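/- If k≥2, then the literal ¬r_{j_{t_{r−1}}} belongs to E_1 (in particular B is nonempty, so r≥2 and t_{r−1} is defined). -/

import Mathlib

open scoped Classical

/-! ### Clauses and literals -/

abbrev Lit (V : Type) := V × Bool
abbrev Clause (V : Type) := Finset (V × Bool)

/-- Propositional variables for the Stone principle: `p i j` and `r j`. -/
inductive SV where
  | p (i j : ℕ) : SV
  | r (j : ℕ) : SV
deriving DecidableEq

/-- A dag on vertices `1,…,N` with unique sink `1`, in which every non-source vertex
(the vertices `1,…,n`) has exactly the two predecessors `p1 i` and `p2 i`,
every edge `(i′,i)` satisfies `i′ > i`, and the sources are exactly `n+1,…,N`. -/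
structure StoneDag where
  N : ℕ
  n : ℕ
  p1 : ℕ → ℕ
  p2 : ℕ → ℕ
  n_lt_N : n < N
  p1_gt : ∀ i, 1 ≤ i → i ≤ n → i < p1 i
  p2_gt : ∀ i, 1 ≤ i → i ≤ n → i < p2 i
  p1_le : ∀ i, 1 ≤ i → i ≤ n → p1 i ≤ N
  p2_le : ∀ i, 1 ≤ i → i ≤ n → p2 i ≤ N
  p_ne : ∀ i, 1 ≤ i → i ≤ n → p1 i ≠ p2 i
  unique_sink : ∀ i, 2 ≤ i → i ≤ N → ∃ v, 1 ≤ v ∧ v ≤ n ∧ (p1 v = i ∨ p2 v = i)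

/-- The clause set `Stone(G,m)`. -/
def stoneClauses (G : StoneDag) (m : ℕ) : Set (Clause SV) :=
  { C | ∃ i, 1 ≤ i ∧ i ≤ G.N ∧
      C = (Finset.Icc 1 m).image (fun j => ((SV.p i j, true) : Lit SV)) } ∪
  { C | ∃ i j, G.n < i ∧ i ≤ G.N ∧ 1 ≤ j ∧ j ≤ m ∧
      C = {(SV.p i j, false), (SV.r j, true)} } ∪
  { C | ∃ j, 1 ≤ j ∧ j ≤ m ∧ C = {(SV.p 1 j, false), (SV.r j, false)} } ∪
  { C | ∃ i j j' j'', 1 ≤ i ∧ i ≤ G.n ∧ 1 ≤ j ∧ j ≤ m ∧ 1 ≤ j' ∧ j' ≤ m ∧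
      1 ≤ j'' ∧ j'' ≤ m ∧ j ≠ j' ∧ j ≠ j'' ∧
      C = {(SV.p (G.p1 i) j', false), (SV.r j', false),
           (SV.p (G.p2 i) j'', false), (SV.r j'', false),
           (SV.p i j, false), (SV.r j, true)} }

/-! ### Resolution inference rules -/

/-- `(A ∖ {x}) ∪ (B ∖ {¬x})`. -/
def wres {V : Type} [DecidableEq V] (x : V) (A B : Clause V) : Clause V :=
  A.erase (x, true) ∪ B.erase (x, false)

/-- w-resolution inference. -/
def wstep {V : Type} [DecidableEq V] (x : V) (A B C : Clause V) : Prop :=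
  C = wres x A B

/-- ordinary resolution inference. -/
def rstep {V : Type} [DecidableEq V] (x : V) (A B C : Clause V) : Prop :=
  (x, true) ∈ A ∧ (x, false) ∈ B ∧ C = wres x A B

/-- degenerate resolution inference. -/
def dstep {V : Type} [DecidableEq V] (x : V) (A B C : Clause V) : Prop :=
  ((x, true) ∈ A ∧ (x, false) ∈ B ∧ C = wres x A B) ∨
  ((x, true) ∈ A ∧ (x, false) ∉ B ∧ C = B) ∨
  ((x, true) ∉ A ∧ (x, false) ∈ B ∧ C = A) ∨
  ((x, true) ∉ A ∧ (x, false) ∉ B ∧ (C = A ∨ C = B))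

/-! ### Tree-like proofs -/

/-- Binary proof trees: each node is labeled with a clause, internal nodes also
with a resolution variable. -/
inductive PTree (V : Type) [DecidableEq V] where
  | leaf : Clause V → PTree V
  | node : Clause V → V → PTree V → PTree V → PTree V

namespace PTree

variable {V : Type} [DecidableEq V]

/-- The clause labeling the root. -/
def clause : PTree V → Clause V
  | leaf c => c
  | node c _ _ _ => c

/-- Number of nodes. -/
def size : PTree V → ℕ
  | leaf _ => 1
  | node _ _ t1 t2 => t1.size + t2.size + 1

/-- The set of variables used as resolution variables. -/
def resVars : PTree V → Finset V
  | leaf _ => ∅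
  | node _ x t1 t2 => insert x (t1.resVars ∪ t2.resVars)

/-- No variable is used as a resolution variable more than once on any
root-to-leaf path. -/
def regular : PTree V → Prop
  | leaf _ => True
  | node _ x t1 t2 => x ∉ t1.resVars ∧ x ∉ t2.resVars ∧ t1.regular ∧ t2.regular

/-- Every internal node is obtained from its children by the inference `step`. -/
def wf (step : V → Clause V → Clause V → Clause V → Prop) : PTree V → Prop
  | leaf _ => True
  | node c x t1 t2 => step x t1.clause t2.clause c ∧ t1.wf step ∧ t2.wf step

/-- All clauses occurring in the tree. -/
def clauses : PTree V → Set (Clause V)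
  | leaf c => {c}
  | node c _ t1 t2 => t1.clauses ∪ t2.clauses ∪ {c}

/-- Every leaf is labeled by a clause of `Γ` or by a clause occurring strictly
earlier in postorder; `S` is the set of clauses occurring before this subtree. -/
def lemmasOK (Γ : Set (Clause V)) : PTree V → Set (Clause V) → Prop
  | leaf c, S => c ∈ Γ ∨ c ∈ S
  | node _ _ t1 t2, S => t1.lemmasOK Γ S ∧ t2.lemmasOK Γ (S ∪ t1.clauses)

/-- Every leaf is labeled by a clause of `Γ`. -/
def leavesIn (Γ : Set (Clause V)) : PTree V → Prop
  | leaf c => c ∈ Γ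
  | node _ _ t1 t2 => t1.leavesIn Γ ∧ t2.leavesIn Γ

/-- Postorder scan computing, from the set `L` of clauses learned so far
(initially `Γ`), the pair of (i) the set of clauses learned after traversing the
subtree — a clause becomes learned when it is the final clause of an input
subderivation, i.e. a subderivation each of whose inferences has at least one
hypothesis that is already learned — and (ii) whether this subtree is an input
subderivation. -/
def scan : PTree V → Set (Clause V) → Set (Clause V) × Prop
  | leaf _, L => (L, True)
  | node c _ t1 t2, L =>
      let r1 := t1.scan L
      let r2 := t2.scan r1.1
      let inp : Prop := r1.2 ∧ r2.2 ∧ (t1.clause ∈ r1.1 ∨ t2.clause ∈ r2.1)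
      ({ d | d ∈ r2.1 ∨ (inp ∧ d = c) }, inp)

/-- Every leaf is labeled by a learned clause (a clause of the initial set `L`,
or one derived by an input subderivation strictly earlier in postorder). -/
def lemOK : PTree V → Set (Clause V) → Prop
  | leaf c, L => c ∈ L
  | node _ _ t1 t2, L => t1.lemOK L ∧ t2.lemOK (t1.scan L).1

end PTree

/-- regWRTL refutation of `Γ`. -/
def RegWRTLRefutation {V : Type} [DecidableEq V] (Γ : Set (Clause V)) (T : PTree V) : Prop :=
  T.clause = ∅ ∧ T.wf wstep ∧ T.regular ∧ T.lemmasOK Γ ∅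

/-- pool resolution refutation of `Γ`. -/
def PoolRefutation {V : Type} [DecidableEq V] (Γ : Set (Clause V)) (T : PTree V) : Prop :=
  T.clause = ∅ ∧ T.wf dstep ∧ T.regular ∧ T.lemmasOK Γ ∅

/-- regRTL refutation of `Γ`. -/
def RegRTLRefutation {V : Type} [DecidableEq V] (Γ : Set (Clause V)) (T : PTree V) : Prop :=
  T.clause = ∅ ∧ T.wf rstep ∧ T.regular ∧ T.lemmasOK Γ ∅

/-- regRTI refutation of `Γ`: all lemmas are input lemmas. -/
def RegRTIRefutation {V : Type} [DecidableEq V] (Γ : Set (Clause V)) (T : PTree V) : Prop :=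
  T.clause = ∅ ∧ T.wf rstep ∧ T.regular ∧ T.lemOK Γ

/-- regRTI derivation of the clause `D` from `Γ`. -/
def RegRTIDeriv {V : Type} [DecidableEq V] (Γ : Set (Clause V)) (D : Clause V)
    (T : PTree V) : Prop :=
  T.clause = D ∧ T.wf rstep ∧ T.regular ∧ T.lemOK Γ ∧
  ∀ x ∈ T.resVars, (x, true) ∉ D ∧ (x, false) ∉ D

/-- regular tree-like resolution derivation of the clause `D` from `Γ`. -/
def RegTreeDeriv {V : Type} [DecidableEq V] (Γ : Set (Clause V)) (D : Clause V)
    (T : PTree V) : Prop :=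
  T.clause = D ∧ T.wf rstep ∧ T.regular ∧ T.leavesIn Γ ∧
  ∀ x ∈ T.resVars, (x, true) ∉ D ∧ (x, false) ∉ D

/-! ### Dag-like derivations -/

/-- A dag-like resolution derivation: a sequence of `len` clauses, each an
axiom (`just i = none`) or obtained by resolution from two earlier clauses. -/
structure DagDeriv (V : Type) [DecidableEq V] where
  len : ℕ
  cl : ℕ → Clause V
  just : ℕ → Option (ℕ × ℕ × V)

namespace DagDeriv

variable {V : Type} [DecidableEq V]

/-- Validity relative to the initial clause set `Γ`. -/
def ok (D : DagDeriv V) (Γ : Set (Clause V)) : Prop :=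
  ∀ i, i < D.len →
    match D.just i with
    | none => D.cl i ∈ Γ
    | some (a, b, x) => a < i ∧ b < i ∧ rstep x (D.cl a) (D.cl b) (D.cl i)

/-- `j` is a premise of `i`. -/
def prem (D : DagDeriv V) (i j : ℕ) : Prop :=
  ∃ a b x, D.just i = some (a, b, x) ∧ (j = a ∨ j = b)

/-- `j` lies in the subderivation of `i` (is reachable from `i` in the dag). -/
def reach (D : DagDeriv V) : ℕ → ℕ → Prop := Relation.ReflTransGen D.prem

/-- `x` is the resolution variable of the inference at `i`. -/
def resAt (D : DagDeriv V) (i : ℕ) (x : V) : Prop := ∃ a b, D.just i = some (a, b, x)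

/-- No variable is used as resolution variable twice along a path of the dag. -/
def regular (D : DagDeriv V) : Prop :=
  ∀ i a b x, D.just i = some (a, b, x) →
    ∀ j, (D.reach a j ∨ D.reach b j) → ¬ D.resAt j x

/-- The subderivation of `i` uses `x` as a resolution variable. -/
def usesVar (D : DagDeriv V) (i : ℕ) (x : V) : Prop := ∃ j, D.reach i j ∧ D.resAt j x

end DagDeriv

/-! ### Supports, bypassing, and the sets `B`, `B⁺`, `S_ℓ^B(C)` for a clause
`C = ¬p_{i_1,j_1} ∨ … ∨ ¬p_{i_k,j_k}` given by `k` and the functions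
`I J : ℕ → ℕ` (with `I ℓ = i_ℓ`, `J ℓ = j_ℓ` for `1 ≤ ℓ ≤ k`). -/

/-- Index `ℓ` is bypassed. -/
def bypassed (k : ℕ) (J : ℕ → ℕ) (ℓ : ℕ) : Prop :=
  ∃ ℓ', ℓ < ℓ' ∧ ℓ' ≤ k ∧ J ℓ' = J ℓ

/-- `ℓ'` is the max-bypasser of `ℓ`. -/
def maxByp (k : ℕ) (J : ℕ → ℕ) (ℓ ℓ' : ℕ) : Prop :=
  ℓ < ℓ' ∧ ℓ' ≤ k ∧ J ℓ' = J ℓ ∧ ∀ a, ℓ < a → a ≤ k → J a = J ℓ → a ≤ ℓ'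

/-- `i_{ℓ'}` directly supports `i_ℓ`. -/
def dsup (G : StoneDag) (k : ℕ) (I J : ℕ → ℕ) (ℓ' ℓ : ℕ) : Prop :=
  1 ≤ ℓ ∧ ℓ < ℓ' ∧ ℓ' ≤ k ∧
  (maxByp k J ℓ ℓ' ∨
    (¬ bypassed k J ℓ ∧ (I ℓ' = G.p1 (I ℓ) ∨ I ℓ' = G.p2 (I ℓ))))

/-- `i_a` supports `i_b`: reflexive transitive closure of direct support. -/
def supp (G : StoneDag) (k : ℕ) (I J : ℕ → ℕ) : ℕ → ℕ → Prop :=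
  Relation.ReflTransGen (dsup G k I J)

/-- `dom(C)` as a set of vertices. -/
def domv (k : ℕ) (I : ℕ → ℕ) : Set ℕ := { v | ∃ a, 1 ≤ a ∧ a ≤ k ∧ I a = v }

/-- `S_ℓ(C)`: the set of vertices of `dom(C)` supporting `i_ℓ`. -/
def suppSet (G : StoneDag) (k : ℕ) (I J : ℕ → ℕ) (ℓ : ℕ) : Set ℕ :=
  { v | ∃ a, 1 ≤ a ∧ a ≤ k ∧ I a = v ∧ supp G k I J a ℓ }

/-- `i_ℓ ∈ B`: not bypassed and some predecessor outside `dom(C)`. -/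
def Bidx (G : StoneDag) (k : ℕ) (I J : ℕ → ℕ) (ℓ : ℕ) : Prop :=
  1 ≤ ℓ ∧ ℓ ≤ k ∧ ¬ bypassed k J ℓ ∧
  (G.p1 (I ℓ) ∉ domv k I ∨ G.p2 (I ℓ) ∉ domv k I)

/-- `i_ℓ ∈ B₁`: exactly one predecessor outside `dom(C)`. -/
def B1idx (G : StoneDag) (k : ℕ) (I J : ℕ → ℕ) (ℓ : ℕ) : Prop :=
  Bidx G k I J ℓ ∧ (G.p1 (I ℓ) ∈ domv k I ∨ G.p2 (I ℓ) ∈ domv k I)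

/-- `i_ℓ ∈ B₂`: both predecessors outside `dom(C)`. -/
def B2idx (G : StoneDag) (k : ℕ) (I J : ℕ → ℕ) (ℓ : ℕ) : Prop :=
  1 ≤ ℓ ∧ ℓ ≤ k ∧ ¬ bypassed k J ℓ ∧
  G.p1 (I ℓ) ∉ domv k I ∧ G.p2 (I ℓ) ∉ domv k I

/-- `i_ℓ ∈ B⁺`: in `B`, or bypassed with max-bypasser in `B`. -/
def Bplus (G : StoneDag) (k : ℕ) (I J : ℕ → ℕ) (ℓ : ℕ) : Prop :=
  Bidx G k I J ℓ ∨ (1 ≤ ℓ ∧ ℓ ≤ k ∧ ∃ ℓ', maxByp k J ℓ ℓ' ∧ Bidx G k I J ℓ')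

/-- Membership in `S_ℓ^B(C)` (on indices). -/
inductive SBmem (G : StoneDag) (k : ℕ) (I J : ℕ → ℕ) (ℓ : ℕ) : ℕ → Prop where
  | base : SBmem G k I J ℓ ℓ
  | byp (a b : ℕ) : SBmem G k I J ℓ a → (a = ℓ ∨ ¬ Bidx G k I J a) →
      maxByp k J a b → ¬ Bidx G k I J b → SBmem G k I J ℓ b
  | pred (a b : ℕ) : SBmem G k I J ℓ a → (a = ℓ ∨ ¬ Bidx G k I J a) →
      ¬ bypassed k J a → 1 ≤ b → b ≤ k →
      (I b = G.p1 (I a) ∨ I b = G.p2 (I a)) → SBmem G k I J ℓ b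

/-- The clause `C_ℓ`. -/
noncomputable def Clc (G : StoneDag) (k : ℕ) (I J : ℕ → ℕ) (ℓ : ℕ) : Clause SV :=
  ((Finset.Icc 1 k).filter fun a =>
      SBmem G k I J ℓ a ∧ ¬(a = ℓ ∧ bypassed k J ℓ)).image
    fun a => ((SV.p (I a) (J a), false) : Lit SV)

/-- The clause `E_ℓ`. -/
noncomputable def Elc (G : StoneDag) (k : ℕ) (I J : ℕ → ℕ) (ℓ : ℕ) : Clause SV :=
  ((Finset.Icc 1 k).filter fun a =>
      SBmem G k I J ℓ a ∧ Bplus G k I J a ∧ (Bidx G k I J ℓ → a ≠ ℓ)).image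
    fun a => ((SV.r (J a), false) : Lit SV)

/-- `t_1,…,t_r` enumerates the indices of `B ∪ {1}` in decreasing order. -/
def EnumB (G : StoneDag) (k : ℕ) (I J : ℕ → ℕ) (r : ℕ) (t : ℕ → ℕ) : Prop :=
  (∀ q, 1 ≤ q → q ≤ r → (Bidx G k I J (t q) ∨ t q = 1)) ∧
  (∀ q q', 1 ≤ q → q < q' → q' ≤ r → t q' < t q) ∧
  (∀ ℓ, Bidx G k I J ℓ ∨ ℓ = 1 → ∃ q, 1 ≤ q ∧ q ≤ r ∧ t q = ℓ)

/-- The clause `F_q`. -/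
noncomputable def Fcl (G : StoneDag) (k : ℕ) (I J : ℕ → ℕ) (r : ℕ) (t : ℕ → ℕ)
    (q : ℕ) : Clause SV :=
  if q = r ∧ ¬ Bidx G k I J 1 then Elc G k I J 1
  else (Finset.Icc 1 (q - 1)).image fun q' => ((SV.r (J (t q')), false) : Lit SV)

/-- The standing hypotheses on the clause `C`: `k ≥ 1`, `1 = i_1 < … < i_k ≤ n`,
`j_ℓ ∈ {1,…,m}`, and every vertex of `dom(C)` supports vertex `1`. -/
def GoodC (G : StoneDag) (m k : ℕ) (I J : ℕ → ℕ) : Prop :=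
  1 ≤ k ∧ I 1 = 1 ∧ I k ≤ G.n ∧
  (∀ a b, 1 ≤ a → a < b → b ≤ k → I a < I b) ∧
  (∀ a, 1 ≤ a → a ≤ k → 1 ≤ J a ∧ J a ≤ m) ∧
  (∀ a, 1 ≤ a → a ≤ k → supp G k I J a 1)

/-!
The predecessors of the largest vertex `i_k` of `dom(C)` are larger still, so `i_k ∈ B`; hence `B`
has an index above `1`, and `s = t_{r-1}` is the least one. Follow a chain of direct supports from
`s` down to `1`. Indices strictly decrease along it, so below `s` it meets `B` at most in `1`, and
therefore it lies in `S_1^B(C)` up to and including the index `c` directly supported by `s`. If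
`i_s` is a predecessor of `i_c`, then `s` itself enters `S_1^B(C)`. If `i_s` is the max-bypasser
of `i_c`, it need not enter, but then `i_c ∈ B⁺` and `j_c = j_s`.
-/

section Supports

variable {G : StoneDag} {k : ℕ} {I J : ℕ → ℕ} {ℓ a c s : ℕ}

theorem maxByp.bypassed (h : maxByp k J a c) : bypassed k J a :=
  ⟨c, h.1, h.2.1, h.2.2.1⟩

theorem maxByp.not_bidx (h : maxByp k J a c) : ¬ Bidx G k I J a :=
  fun hB => hB.2.2.1 h.bypassed

theorem bidx_of_forall_le (hk : 1 ≤ k) (hI : 1 ≤ I k) (hn : I k ≤ G.n)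
    (hmax : ∀ a, 1 ≤ a → a ≤ k → I a ≤ I k) : Bidx G k I J k := by
  refine ⟨hk, le_rfl, fun ⟨b, hkb, hbk, _⟩ => hkb.not_ge hbk, .inl ?_⟩
  rintro ⟨a, ha, hak, hIa⟩
  exact (G.p1_gt (I k) hI hn).not_ge (hIa ▸ hmax a ha hak)

theorem supp.le (h : supp G k I J a ℓ) : ℓ ≤ a := by
  induction h using Relation.ReflTransGen.head_induction_on with
  | refl => exact le_rfl
  | head hac _ ih => exact ih.trans hac.2.1.le

theorem SBmem.of_dsup (hc : SBmem G k I J ℓ c) (hcB : c = ℓ ∨ ¬ Bidx G k I J c)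
    (hac : dsup G k I J a c) (haB : ¬ Bidx G k I J a) : SBmem G k I J ℓ a := by
  obtain ⟨hc1, hca, hak, hbyp | ⟨hnb, hpred⟩⟩ := hac
  · exact .byp c a hc hcB hbyp haB
  · exact .pred c a hc hcB hnb (hc1.trans hca.le) hak hpred

theorem SBmem.of_supp (ha : supp G k I J a ℓ) (hB : ∀ b, ℓ < b → b ≤ a → ¬ Bidx G k I J b) :
    SBmem G k I J ℓ a := by
  induction ha using Relation.ReflTransGen.head_induction_on with
  | refl => exact .base
  | @head a c hac hcℓ ih =>
    have hℓc : ℓ ≤ c := supp.le hcℓ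
    have hca : c < a := hac.2.1
    have hc : SBmem G k I J ℓ c := ih fun b hℓb hbc => hB b hℓb (hbc.trans hca.le)
    have hcB : c = ℓ ∨ ¬ Bidx G k I J c := hℓc.eq_or_lt'.imp_right fun hlt => hB c hlt hca.le
    exact hc.of_dsup hcB hac (hB a (hℓc.trans_lt hca) le_rfl)

theorem mem_elc {j : ℕ} :
    ((SV.r j, false) : Lit SV) ∈ Elc G k I J ℓ ↔
      ∃ a, 1 ≤ a ∧ a ≤ k ∧ SBmem G k I J ℓ a ∧ Bplus G k I J a ∧
        (Bidx G k I J ℓ → a ≠ ℓ) ∧ J a = j := by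
  simp [Elc, and_assoc]

theorem mem_elc_of_dsup (hc : SBmem G k I J ℓ c) (hcB : c = ℓ ∨ ¬ Bidx G k I J c)
    (hsc : dsup G k I J s c) (hs : Bidx G k I J s) (hsℓ : s ≠ ℓ) :
    ((SV.r (J s), false) : Lit SV) ∈ Elc G k I J ℓ := by
  obtain ⟨hc1, hcs, hsk, hbyp | ⟨hnb, hpred⟩⟩ := hsc
  · have hcplus : Bplus G k I J c := .inr ⟨hc1, hcs.le.trans hsk, s, hbyp, hs⟩
    exact mem_elc.2 ⟨c, hc1, hcs.le.trans hsk, hc, hcplus,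
      fun hℓB hcℓ => hbyp.not_bidx (hcℓ ▸ hℓB), hbyp.2.2.1.symm⟩
  · have hsmem : SBmem G k I J ℓ s := .pred c s hc hcB hnb hs.1 hsk hpred
    exact mem_elc.2 ⟨s, hs.1, hsk, hsmem, .inl hs, fun _ => hsℓ, rfl⟩

theorem mem_elc_of_least (hs : Bidx G k I J s) (hℓs : ℓ < s) (hsupp : supp G k I J s ℓ)
    (hleast : ∀ b, ℓ < b → b < s → ¬ Bidx G k I J b) :
    ((SV.r (J s), false) : Lit SV) ∈ Elc G k I J ℓ := by
  obtain rfl | ⟨c, hsc, hcℓ⟩ := hsupp.cases_head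
  · exact absurd hℓs (lt_irrefl _)
  have hcs : c < s := hsc.2.1
  have hc : SBmem G k I J ℓ c := .of_supp hcℓ fun b hℓb hbc => hleast b hℓb (hbc.trans_lt hcs)
  have hcB : c = ℓ ∨ ¬ Bidx G k I J c :=
    (supp.le hcℓ).eq_or_lt'.imp_right fun hlt => hleast c hlt hcs
  exact mem_elc_of_dsup hc hcB hsc hs hℓs.ne'

end Supports

theorem GoodC.bidx_last {G : StoneDag} {m k : ℕ} {I J : ℕ → ℕ} (h : GoodC G m k I J) :
    Bidx G k I J k := by
  obtain ⟨hk, hI1, hIk, hmono, -, -⟩ := h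
  have hmax : ∀ a, 1 ≤ a → a ≤ k → I a ≤ I k := fun a ha hak =>
    hak.eq_or_lt.elim (fun hEq => hEq ▸ le_rfl) fun hlt => (hmono a k ha hlt le_rfl).le
  exact bidx_of_forall_le hk (hI1 ▸ hmax 1 le_rfl hk) hIk hmax

namespace EnumB

variable {G : StoneDag} {k : ℕ} {I J : ℕ → ℕ} {r : ℕ} {t : ℕ → ℕ} {q b : ℕ}

theorem strictAntiOn (h : EnumB G k I J r t) : StrictAntiOn t (Set.Icc 1 r) :=
  fun _ hq _ hq' hlt => h.2.1 _ _ hq.1 hlt hq'.2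

theorem one_le (h : EnumB G k I J r t) (hq : q ∈ Set.Icc 1 r) : 1 ≤ t q :=
  (h.1 q hq.1 hq.2).elim (·.1) (·.ge)

theorem last_eq_one (h : EnumB G k I J r t) : t r = 1 := by
  obtain ⟨q, hq, hqr, htq⟩ := h.2.2 1 (.inr rfl)
  have hr : r ∈ Set.Icc 1 r := ⟨hq.trans hqr, le_rfl⟩
  exact le_antisymm (htq ▸ h.strictAntiOn.antitoneOn ⟨hq, hqr⟩ hr hqr) (h.one_le hr)

theorem one_lt (h : EnumB G k I J r t) (hq : 1 ≤ q) (hqr : q < r) : 1 < t q :=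
  h.last_eq_one ▸ h.2.1 q r hq hqr le_rfl

theorem bidx (h : EnumB G k I J r t) (hq : 1 ≤ q) (hqr : q < r) : Bidx G k I J (t q) :=
  (h.1 q hq hqr.le).resolve_right (h.one_lt hq hqr).ne'

theorem two_le (h : EnumB G k I J r t) (hb : Bidx G k I J b) (hb1 : b ≠ 1) : 2 ≤ r := by
  obtain ⟨q, hq, hqr, rfl⟩ := h.2.2 b (.inl hb)
  have hne : q ≠ r := fun hEq => hb1 (hEq ▸ h.last_eq_one)
  omega

theorem not_bidx_between (h : EnumB G k I J r t) (hq : 1 ≤ q) (hqr : q < r)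
    (hlt : t (q + 1) < b) (hgt : b < t q) : ¬ Bidx G k I J b := by
  intro hb
  obtain ⟨q', hq', hqr', rfl⟩ := h.2.2 b (.inl hb)
  have hqq' : q < q' := (h.strictAntiOn.lt_iff_gt ⟨hq', hqr'⟩ ⟨hq, hqr.le⟩).1 hgt
  have hq'q : q' < q + 1 := (h.strictAntiOn.lt_iff_gt ⟨by omega, hqr⟩ ⟨hq', hqr'⟩).1 hlt
  omega

theorem mem_elc_of_supp (h : EnumB G k I J r t) (hr : 2 ≤ r)
    (hsupp : supp G k I J (t (r - 1)) 1) :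
    ((SV.r (J (t (r - 1))), false) : Lit SV) ∈ Elc G k I J 1 := by
  obtain ⟨q, rfl⟩ : ∃ q, r = q + 1 := ⟨r - 1, by omega⟩
  rw [Nat.add_sub_cancel] at hsupp ⊢
  have hq : 1 ≤ q := by omega
  have hleast : ∀ b, 1 < b → b < t q → ¬ Bidx G k I J b := fun b hb hbq =>
    h.not_bidx_between hq q.lt_succ_self (h.last_eq_one.trans_lt hb) hbq
  exact mem_elc_of_least (h.bidx hq q.lt_succ_self) (h.one_lt hq q.lt_succ_self) hsupp hleast

end EnumB

/-- if `k ≥ 2` then `¬r_{j_{t_{r-1}}} ∈ E_1` (in particular `B` is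
nonempty, so `r ≥ 2`). -/
theorem E1_contains (G : StoneDag) (m k : ℕ) (I J : ℕ → ℕ)
    (h : GoodC G m k I J) (hk2 : 2 ≤ k)
    (r : ℕ) (t : ℕ → ℕ) (ht : EnumB G k I J r t) :
    2 ≤ r ∧ ((SV.r (J (t (r - 1))), false) : Lit SV) ∈ Elc G k I J 1 := by
  have hr : 2 ≤ r := ht.two_le h.bidx_last (by omega)
  have hB : Bidx G k I J (t (r - 1)) := ht.bidx (by omega) (by omega)
  have hsupp : supp G k I J (t (r - 1)) 1 := h.2.2.2.2.2 _ hB.1 hB.2.1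
  exact ⟨hr, ht.mem_elc_of_supp hr hsupp⟩
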